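/- Under the BARSS mixture setup described in the context, for γ ∈ (0,1) define the outage capacity C_o(γ) = sup{τ ≥ 0 : P(τ-outage) ≤ γ}, with the supremum taken in [0,∞] and sup ∅ = 0. Then C_o(γ) ≤ sup{τ ≥ 0 : 1 − Σ_{k=1}^K p_k* ∫₀^∞ f_k(r)·E[V̂_k⁺(H_k,τ,r)] dr ≤ γ} and C_o(γ) ≥ sup{τ ≥ 0 : 1 − Σ_{k=1}^K p_k* ∫₀^∞ f_k(r)·E[V̂_k⁻(H_k,τ,r)] dr ≤ γ}. -/

import Mathlib

/-!
A link of rate `τ > 0` survives exactly when the interference stays below a budget that is affine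
in the fading. Conditioning on the fading, which is independent of the interference, the coverage
probability is the mean of the interference CDF evaluated at the random budget. Any envelope of that
CDF therefore brackets the outage probability for every `τ > 0`, and the outage capacity is
antitone in the outage probability. The value `τ = 0`, where the budget divides by zero, contributes
`0` to each supremum and can be ignored.
-/

open MeasureTheory ProbabilityTheory
open scoped ProbabilityTheory ENNReal

/-- The standard normal cumulative distribution function. -/
noncomputable def stdNormalCDF (x : ℝ) : ℝ :=
  (Real.sqrt (2 * Real.pi))⁻¹ * ∫ t in Set.Iic x, Real.exp (-(t ^ 2) / 2)

/-- The Berry–Esseen multiplicative function `c(x) = min{0.4785, 31.935/(1+|x|³)}`. -/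
noncomputable def berryC (x : ℝ) : ℝ := min 0.4785 (31.935 / (1 + |x| ^ 3))

/-- The rate of a link with transmit power `P`, path gain `g`, noise power `N₀` and processing gain
`PG`, under fading `h` and aggregate interference `i`. -/
noncomputable def linkRate (P g N₀ PG h i : ℝ) : ℝ :=
  Real.log (1 + P * h * g / (N₀ + i / PG))

/-- The largest aggregate interference that a link of rate `τ` tolerates under fading `h`; a
negative budget means that the noise alone causes an outage. Only meaningful for `τ > 0`. -/
noncomputable def interferenceBudget (P g N₀ PG h τ : ℝ) : ℝ :=
  P * (h * g / (Real.exp τ - 1) - N₀ / P) * PG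

/-- The upper envelope `V̂⁺(h, τ, r)` of the coverage probability given fading `h`, where `m`, `s`
and `ξ` are the values at `r` of the mean, standard deviation and error factor of the
interference. -/
noncomputable def gaussianCoverageUpper (P g N₀ PG m s ξ h τ : ℝ) : ℝ :=
  if (Real.exp τ - 1) * N₀ / (P * g) ≤ h then
    min 1 (stdNormalCDF ((interferenceBudget P g N₀ PG h τ - m) / s) +
      ξ * berryC ((interferenceBudget P g N₀ PG h τ - m) / s))
  else 0

/-- The lower envelope `V̂⁻(h, τ, r)` of the coverage probability given fading `h`, with the
parameters of `gaussianCoverageUpper`. -/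
noncomputable def gaussianCoverageLower (P g N₀ PG m s ξ h τ : ℝ) : ℝ :=
  if (Real.exp τ - 1) * N₀ / (P * g) ≤ h then
    max 0 (stdNormalCDF ((interferenceBudget P g N₀ PG h τ - m) / s) -
      ξ * berryC ((interferenceBudget P g N₀ PG h τ - m) / s))
  else 0

/-- The mean of `φ k r` over a random tier `k` of probability `p k` and, given `k`, a random
location `r` of density `f k` with respect to `ρ`. -/
noncomputable def mixtureMean {ι R : Type*} [Fintype ι] [MeasurableSpace R] (ρ : Measure R)
    (p : ι → ℝ) (f φ : ι → R → ℝ) : ℝ :=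
  ∑ k, p k * ∫ r, f k r * φ k r ∂ρ

/-- The outage capacity at level `γ` for the outage probability `out τ`: the supremum in `[0, ∞]` of
the rates `τ ≥ 0` with `out τ ≤ γ`, and `0` if there are none. -/
noncomputable def outageCapacity (out : ℝ → ℝ) (γ : ℝ) : ℝ≥0∞ :=
  sSup (ENNReal.ofReal '' {τ : ℝ | 0 ≤ τ ∧ out τ ≤ γ})

lemma outageCapacity_anti {out₁ out₂ : ℝ → ℝ} {γ : ℝ} (h : ∀ τ, 0 < τ → out₁ τ ≤ out₂ τ) :
    outageCapacity out₂ γ ≤ outageCapacity out₁ γ := by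
  refine sSup_le ?_
  rintro _ ⟨τ, ⟨hτ, hout⟩, rfl⟩
  rcases hτ.eq_or_lt with rfl | hτ'
  · simp
  · exact le_sSup ⟨τ, ⟨hτ, (h τ hτ').trans hout⟩, rfl⟩

section Link

variable {P g N₀ PG h i τ : ℝ}

lemma le_linkRate_iff (hP : 0 < P) (hg : 0 < g) (hPG : 0 < PG) (hh : 0 ≤ h) (hτ : 0 < τ)
    (hi : 0 < N₀ + i / PG) :
    τ ≤ linkRate P g N₀ PG h i ↔ i ≤ interferenceBudget P g N₀ PG h τ := by
  have hexp : 0 < Real.exp τ - 1 := sub_pos.2 (Real.one_lt_exp_iff.2 hτ)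
  have hsinr : 0 ≤ P * h * g / (N₀ + i / PG) := by positivity
  have hbudget : interferenceBudget P g N₀ PG h τ = (P * h * g / (Real.exp τ - 1) - N₀) * PG := by
    unfold interferenceBudget
    field_simp
  calc τ ≤ linkRate P g N₀ PG h i
      ↔ Real.exp τ - 1 ≤ P * h * g / (N₀ + i / PG) := by
        rw [linkRate, Real.le_log_iff_exp_le (by linarith), sub_le_iff_le_add']
    _ ↔ N₀ + i / PG ≤ P * h * g / (Real.exp τ - 1) := by rw [le_div_comm₀ hexp hi]
    _ ↔ i ≤ interferenceBudget P g N₀ PG h τ := by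
        rw [hbudget, ← le_sub_iff_add_le', div_le_iff₀ hPG]

lemma interferenceBudget_nonneg_iff (hP : 0 < P) (hg : 0 < g) (hPG : 0 < PG) (hτ : 0 < τ) :
    0 ≤ interferenceBudget P g N₀ PG h τ ↔ (Real.exp τ - 1) * N₀ / (P * g) ≤ h := by
  have hexp : 0 < Real.exp τ - 1 := sub_pos.2 (Real.one_lt_exp_iff.2 hτ)
  rw [interferenceBudget, mul_nonneg_iff_of_pos_right hPG, mul_nonneg_iff_of_pos_left hP,
    sub_nonneg, div_le_div_iff₀ hP hexp, div_le_iff₀ (mul_pos hP hg)]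
  ring_nf

lemma measurableSet_linkRate_lt {α : Type*} [MeasurableSpace α] {g h i : α → ℝ}
    (hg : Measurable g) (hh : Measurable h) (hi : Measurable i) :
    MeasurableSet {x | linkRate P (g x) N₀ PG (h x) (i x) < τ} :=
  measurableSet_lt (by unfold linkRate; fun_prop) measurable_const

end Link

section Gaussian

lemma stdNormalCDF_mono : Monotone stdNormalCDF := by
  intro x y hxy
  have hint : Integrable fun t : ℝ => Real.exp (-(t ^ 2) / 2) := by
    convert integrable_exp_neg_mul_sq (b := 1 / 2) (by norm_num) using 3
    ring
  exact mul_le_mul_of_nonneg_left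
    (setIntegral_mono_set hint.integrableOn (ae_of_all _ fun t => (Real.exp_pos _).le)
      (Set.Iic_subset_Iic.2 hxy).eventuallyLE) (by positivity)

lemma measurable_stdNormalCDF : Measurable stdNormalCDF := stdNormalCDF_mono.measurable

lemma measurable_berryC : Measurable berryC := by
  unfold berryC
  fun_prop

variable {R : Type*} [MeasurableSpace R] {g m s ξ : R → ℝ}

lemma measurable_gaussianCoverageUpper (hg : Measurable g) (hm : Measurable m)
    (hs : Measurable s) (hξ : Measurable ξ) (P N₀ PG τ : ℝ) :
    Measurable fun x : R × ℝ =>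
      gaussianCoverageUpper P (g x.1) N₀ PG (m x.1) (s x.1) (ξ x.1) x.2 τ := by
  have hΨ := measurable_stdNormalCDF
  have hc := measurable_berryC
  unfold gaussianCoverageUpper interferenceBudget
  exact .ite (measurableSet_le (by fun_prop) measurable_snd) (by fun_prop) measurable_const

lemma measurable_gaussianCoverageLower (hg : Measurable g) (hm : Measurable m)
    (hs : Measurable s) (hξ : Measurable ξ) (P N₀ PG τ : ℝ) :
    Measurable fun x : R × ℝ =>
      gaussianCoverageLower P (g x.1) N₀ PG (m x.1) (s x.1) (ξ x.1) x.2 τ := by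
  have hΨ := measurable_stdNormalCDF
  have hc := measurable_berryC
  unfold gaussianCoverageLower interferenceBudget
  exact .ite (measurableSet_le (by fun_prop) measurable_snd) (by fun_prop) measurable_const

lemma gaussianCoverageUpper_le_one (P g N₀ PG m s ξ h τ : ℝ) :
    gaussianCoverageUpper P g N₀ PG m s ξ h τ ≤ 1 := by
  unfold gaussianCoverageUpper
  split_ifs
  exacts [min_le_left _ _, zero_le_one]

lemma gaussianCoverageLower_nonneg (P g N₀ PG m s ξ h τ : ℝ) :
    0 ≤ gaussianCoverageLower P g N₀ PG m s ξ h τ := by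
  unfold gaussianCoverageLower
  split_ifs
  exacts [le_max_left _ _, le_rfl]

end Gaussian

section Probability

variable {Ω : Type*} [MeasurableSpace Ω] {Q : Measure Ω} [IsProbabilityMeasure Q]

lemma measureReal_le_interferenceBudget_mem_Icc {P g N₀ PG m s ξ τ : ℝ} (hP : 0 < P) (hg : 0 < g)
    (hPG : 0 < PG) (hs : 0 < s) (hτ : 0 < τ) {Y : Ω → ℝ} (hY : ∀ ω, 0 ≤ Y ω)
    (hGauss : ∀ x, |Q.real {ω | (Y ω - m) / s ≤ x} - stdNormalCDF x| ≤ ξ * berryC x) (h : ℝ) :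
    Q.real {ω | Y ω ≤ interferenceBudget P g N₀ PG h τ} ∈
      Set.Icc (gaussianCoverageLower P g N₀ PG m s ξ h τ)
        (gaussianCoverageUpper P g N₀ PG m s ξ h τ) := by
  have hstd := abs_le.1 (hGauss ((interferenceBudget P g N₀ PG h τ - m) / s))
  simp only [div_le_div_iff_of_pos_right hs, sub_le_sub_iff_right] at hstd
  unfold gaussianCoverageLower gaussianCoverageUpper
  split_ifs with hh
  · exact ⟨max_le measureReal_nonneg (by linarith), le_min measureReal_le_one (by linarith)⟩
  · rw [← interferenceBudget_nonneg_iff hP hg hPG hτ] at hh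
    have hempty : {ω | Y ω ≤ interferenceBudget P g N₀ PG h τ} = ∅ :=
      Set.eq_empty_of_forall_notMem fun ω hω => hh ((hY ω).trans hω)
    simp [hempty]

lemma integral_le_of_forall_le {g : Ω → ℝ} {c : ℝ} (hc : 0 ≤ c) (hg : ∀ ω, g ω ≤ c) :
    ∫ ω, g ω ∂Q ≤ c := by
  by_cases hint : Integrable g Q
  · simpa using integral_mono hint (integrable_const c) hg
  · rwa [integral_undef hint]

lemma measureReal_prodMk_mem_eq_integral_of_indepFun {α β : Type*} [MeasurableSpace α]
    [MeasurableSpace β] {X : Ω → α} {Y : Ω → β} (hX : Measurable X) (hY : Measurable Y)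
    (hXY : IndepFun X Y Q) {s : Set (α × β)} (hs : MeasurableSet s) :
    Q.real {ω | (X ω, Y ω) ∈ s} = ∫ ω, Q.real {ω' | (X ω, Y ω') ∈ s} ∂Q := by
  have hsection (x : α) : Q.map Y (Prod.mk x ⁻¹' s) = Q {ω | (x, Y ω) ∈ s} :=
    Measure.map_apply hY (measurable_prodMk_left hs)
  have hmeas : Measurable fun x => Q {ω | (x, Y ω) ∈ s} := by
    simp_rw [← hsection]
    exact measurable_measure_prodMk_left hs
  have hlintegral : Q {ω | (X ω, Y ω) ∈ s} = ∫⁻ ω, Q {ω' | (X ω, Y ω') ∈ s} ∂Q := by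
    calc Q {ω | (X ω, Y ω) ∈ s} = Q.map (fun ω => (X ω, Y ω)) s :=
          (Measure.map_apply (hX.prodMk hY) hs).symm
      _ = ∫⁻ x, Q {ω | (x, Y ω) ∈ s} ∂Q.map X := by
        rw [hXY.map_prod_eq_prod_map_map hX.aemeasurable hY.aemeasurable, Measure.prod_apply hs]
        simp_rw [hsection]
      _ = ∫⁻ ω, Q {ω' | (X ω, Y ω') ∈ s} ∂Q := lintegral_map hmeas hX
  simp only [measureReal_def]
  rw [hlintegral]
  exact (integral_toReal (hmeas.comp hX).aemeasurable
    (ae_of_all _ fun _ => measure_lt_top _ _)).symm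

section FixedLocation

variable {P g N₀ PG τ : ℝ} {X Y : Ω → ℝ}

lemma one_sub_measureReal_linkRate_lt_eq_integral (hP : 0 < P) (hg : 0 < g) (hPG : 0 < PG)
    (hτ : 0 < τ) (hX : Measurable X) (hX₀ : ∀ ω, 0 ≤ X ω) (hY : Measurable Y)
    (hXY : IndepFun X Y Q) (hpos : ∀ᵐ ω ∂Q, 0 < N₀ + Y ω / PG) :
    1 - Q.real {ω | linkRate P g N₀ PG (X ω) (Y ω) < τ} =
      ∫ ω, Q.real {ω' | Y ω' ≤ interferenceBudget P g N₀ PG (X ω) τ} ∂Q := by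
  have hs : MeasurableSet {x : ℝ × ℝ | x.2 ≤ interferenceBudget P g N₀ PG x.1 τ} :=
    measurableSet_le measurable_snd (by unfold interferenceBudget; fun_prop)
  calc 1 - Q.real {ω | linkRate P g N₀ PG (X ω) (Y ω) < τ}
      = Q.real {ω | linkRate P g N₀ PG (X ω) (Y ω) < τ}ᶜ :=
        (probReal_compl_eq_one_sub (measurableSet_linkRate_lt measurable_const hX hY)).symm
    _ = Q.real {ω | Y ω ≤ interferenceBudget P g N₀ PG (X ω) τ} := by
        refine measureReal_congr ?_
        filter_upwards [hpos] with ω hω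
        exact propext (not_lt.trans (le_linkRate_iff hP hg hPG (hX₀ ω) hτ hω))
    _ = ∫ ω, Q.real {ω' | Y ω' ≤ interferenceBudget P g N₀ PG (X ω) τ} ∂Q :=
        measureReal_prodMk_mem_eq_integral_of_indepFun hX hY hXY hs

lemma one_sub_measureReal_linkRate_lt_mem_Icc (hP : 0 < P) (hg : 0 < g) (hPG : 0 < PG)
    (hτ : 0 < τ) (hX : Measurable X) (hX₀ : ∀ ω, 0 ≤ X ω) (hY : Measurable Y)
    (hXY : IndepFun X Y Q) (hpos : ∀ᵐ ω ∂Q, 0 < N₀ + Y ω / PG) {Vm Vp : ℝ → ℝ}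
    (hVm : Measurable Vm) (hVp : Measurable Vp) (hVm₀ : ∀ h, 0 ≤ Vm h) (hVp₁ : ∀ h, Vp h ≤ 1)
    (hV : ∀ h, 0 ≤ h →
      Q.real {ω | Y ω ≤ interferenceBudget P g N₀ PG h τ} ∈ Set.Icc (Vm h) (Vp h)) :
    1 - Q.real {ω | linkRate P g N₀ PG (X ω) (Y ω) < τ} ∈
      Set.Icc (∫ ω, Vm (X ω) ∂Q) (∫ ω, Vp (X ω) ∂Q) := by
  set F : ℝ → ℝ := fun h => Q.real {ω | Y ω ≤ interferenceBudget P g N₀ PG h τ}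
  have hFmeas : Measurable F := by
    have hmono : Monotone fun x => Q.real {ω | Y ω ≤ x} := fun x y hxy =>
      measureReal_mono fun ω hω => le_trans hω hxy
    exact hmono.measurable.comp (by unfold interferenceBudget; fun_prop)
  have hint {V : ℝ → ℝ} (hV : Measurable V) (h01 : ∀ h, 0 ≤ h → V h ∈ Set.Icc 0 1) :
      Integrable (fun ω => V (X ω)) Q :=
    .of_mem_Icc 0 1 (hV.comp hX).aemeasurable (ae_of_all _ fun ω => h01 _ (hX₀ ω))
  have hFint := hint hFmeas fun h _ => ⟨measureReal_nonneg, measureReal_le_one⟩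
  have hVmint := hint hVm fun h hh => ⟨hVm₀ h, (hV h hh).1.trans measureReal_le_one⟩
  have hVpint := hint hVp fun h hh => ⟨measureReal_nonneg.trans (hV h hh).2, hVp₁ h⟩
  rw [one_sub_measureReal_linkRate_lt_eq_integral hP hg hPG hτ hX hX₀ hY hXY hpos]
  exact ⟨integral_mono hVmint hFint fun ω => (hV _ (hX₀ ω)).1,
    integral_mono hFint hVpint fun ω => (hV _ (hX₀ ω)).2⟩

end FixedLocation

end Probability

section Mixture

variable {ι R : Type*} [MeasurableSpace R] {ρ : Measure R}

lemma integrable_mul_of_mem_Icc {f φ : R → ℝ} (hf : Integrable f ρ) (hφ : Measurable φ)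
    (h01 : ∀ᵐ r ∂ρ, φ r ∈ Set.Icc 0 1) : Integrable (fun r => f r * φ r) ρ :=
  hf.mul_bdd (c := 1) hφ.aestronglyMeasurable <| h01.mono fun r hr => by
    rw [Real.norm_of_nonneg hr.1]
    exact hr.2

variable [Fintype ι] {p : ι → ℝ} {f φ ψ : ι → R → ℝ}

lemma mixtureMean_one_sub (hp : ∑ k, p k = 1) (hf : ∀ k, ∫ r, f k r ∂ρ = 1)
    (hφ : ∀ k, Integrable (fun r => f k r * φ k r) ρ) :
    mixtureMean ρ p f (fun k r => 1 - φ k r) = 1 - mixtureMean ρ p f φ := by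
  have htier (k : ι) : ∫ r, f k r * (1 - φ k r) ∂ρ = 1 - ∫ r, f k r * φ k r ∂ρ := by
    have hfk : Integrable (f k) ρ := .of_integral_ne_zero (by simp [hf k])
    simp_rw [mul_sub, mul_one]
    rw [integral_sub hfk (hφ k), hf k]
  simp only [mixtureMean, htier]
  simp only [mul_sub, mul_one, Finset.sum_sub_distrib, hp]

lemma mixtureMean_mono (hp : ∀ k, 0 ≤ p k) (hf : ∀ k, ∀ᵐ r ∂ρ, 0 ≤ f k r)
    (hφ : ∀ k, Integrable (fun r => f k r * φ k r) ρ)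
    (hψ : ∀ k, Integrable (fun r => f k r * ψ k r) ρ) (h : ∀ k, ∀ᵐ r ∂ρ, φ k r ≤ ψ k r) :
    mixtureMean ρ p f φ ≤ mixtureMean ρ p f ψ := by
  refine Finset.sum_le_sum fun k _ =>
    mul_le_mul_of_nonneg_left (integral_mono_ae (hφ k) (hψ k) ?_) (hp k)
  filter_upwards [hf k, h k] with r hfr hr
  exact mul_le_mul_of_nonneg_left hr hfr

lemma mixtureMean_mem_Icc_of_one_sub_mem_Icc {A B : ι → R → ℝ} (hp : ∀ k, 0 ≤ p k)
    (hpsum : ∑ k, p k = 1) (hf : ∀ k, ∀ᵐ r ∂ρ, 0 ≤ f k r) (hfint : ∀ k, ∫ r, f k r ∂ρ = 1)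
    (hφ : ∀ k, Measurable (φ k)) (hA : ∀ k, Measurable (A k)) (hB : ∀ k, Measurable (B k))
    (hφ₀₁ : ∀ k, ∀ᵐ r ∂ρ, φ k r ∈ Set.Icc 0 1) (hA₀ : ∀ k, ∀ᵐ r ∂ρ, 0 ≤ A k r)
    (hB₁ : ∀ k, ∀ᵐ r ∂ρ, B k r ≤ 1) (h : ∀ k, ∀ᵐ r ∂ρ, 1 - φ k r ∈ Set.Icc (A k r) (B k r)) :
    mixtureMean ρ p f φ ∈ Set.Icc (1 - mixtureMean ρ p f B) (1 - mixtureMean ρ p f A) := by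
  have hfk (k : ι) : Integrable (f k) ρ := .of_integral_ne_zero (by simp [hfint k])
  have hAint (k : ι) : Integrable (fun r => f k r * A k r) ρ := by
    refine integrable_mul_of_mem_Icc (hfk k) (hA k) ?_
    filter_upwards [hφ₀₁ k, hA₀ k, h k] with r hφr hAr hr
    exact ⟨hAr, hr.1.trans (sub_le_self _ hφr.1)⟩
  have hBint (k : ι) : Integrable (fun r => f k r * B k r) ρ := by
    refine integrable_mul_of_mem_Icc (hfk k) (hB k) ?_
    filter_upwards [hφ₀₁ k, hB₁ k, h k] with r hφr hBr hr
    exact ⟨(sub_nonneg.2 hφr.2).trans hr.2, hBr⟩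
  have hφint (k : ι) : Integrable (fun r => f k r * φ k r) ρ :=
    integrable_mul_of_mem_Icc (hfk k) (hφ k) (hφ₀₁ k)
  have hsubint (k : ι) : Integrable (fun r => f k r * (1 - φ k r)) ρ := by
    simp_rw [mul_sub, mul_one]
    exact (hfk k).sub (hφint k)
  have hlower := mixtureMean_mono hp hf hAint hsubint fun k => (h k).mono fun r hr => hr.1
  have hupper := mixtureMean_mono hp hf hsubint hBint fun k => (h k).mono fun r hr => hr.2
  rw [mixtureMean_one_sub hpsum hfint hφint] at hlower hupper
  exact ⟨by linarith, by linarith⟩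

end Mixture

theorem barss_outage_capacity_bounds_general
    {Ω ι R : Type*} [MeasurableSpace Ω] {Q : Measure Ω} [IsProbabilityMeasure Q] [Fintype ι]
    [MeasurableSpace R] {ρ : Measure R}
    {P : ι → ℝ} (hP : ∀ k, 0 < P k)
    {G : ι → R → ℝ} (hGmeas : ∀ k, Measurable (G k)) (hGpos : ∀ k, ∀ᵐ r ∂ρ, 0 < G k r)
    {N₀ PG : ℝ} (hPG : 0 < PG)
    {p : ι → ℝ} (hp : ∀ k, 0 ≤ p k) (hpsum : ∑ k, p k = 1)
    {f : ι → R → ℝ} (hfnn : ∀ k, ∀ᵐ r ∂ρ, 0 ≤ f k r) (hfint : ∀ k, ∫ r, f k r ∂ρ = 1)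
    {H : ι → Ω → ℝ} (hHmeas : ∀ k, Measurable (H k)) (hHnn : ∀ k ω, 0 ≤ H k ω)
    {I : ι → R → Ω → ℝ} (hImeas : ∀ k, Measurable (Function.uncurry (I k)))
    (hindep : ∀ k, ∀ᵐ r ∂ρ, IndepFun (H k) (I k r) Q)
    (hpos : ∀ k, ∀ᵐ r ∂ρ, ∀ᵐ ω ∂Q, 0 < N₀ + I k r ω / PG)
    {Vm Vp : ι → ℝ → ℝ → R → ℝ}
    (hVm : ∀ k τ, Measurable fun x : R × ℝ => Vm k x.2 τ x.1)
    (hVp : ∀ k τ, Measurable fun x : R × ℝ => Vp k x.2 τ x.1)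
    (hVm₀ : ∀ k h τ r, 0 ≤ Vm k h τ r) (hVp₁ : ∀ k h τ r, Vp k h τ r ≤ 1)
    (hV : ∀ k τ, 0 < τ → ∀ᵐ r ∂ρ, ∀ h, 0 ≤ h →
      Q.real {ω | I k r ω ≤ interferenceBudget (P k) (G k r) N₀ PG h τ} ∈
        Set.Icc (Vm k h τ r) (Vp k h τ r))
    (γ : ℝ) :
    outageCapacity (fun τ => mixtureMean ρ p f fun k r =>
        Q.real {ω | linkRate (P k) (G k r) N₀ PG (H k ω) (I k r ω) < τ}) γ ∈
      Set.Icc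
        (outageCapacity
          (fun τ => 1 - mixtureMean ρ p f fun k r => ∫ ω, Vm k (H k ω) τ r ∂Q) γ)
        (outageCapacity
          (fun τ => 1 - mixtureMean ρ p f fun k r => ∫ ω, Vp k (H k ω) τ r ∂Q) γ) := by
  have houtMeas (k : ι) (τ : ℝ) : Measurable fun r =>
      Q.real {ω | linkRate (P k) (G k r) N₀ PG (H k ω) (I k r ω) < τ} :=
    (measurable_measure_prodMk_left (measurableSet_linkRate_lt ((hGmeas k).comp measurable_fst)
      ((hHmeas k).comp measurable_snd) (hImeas k))).ennreal_toReal
  have hmeanMeas {V : ι → ℝ → ℝ → R → ℝ}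
      (hV : ∀ k τ, Measurable fun x : R × ℝ => V k x.2 τ x.1) (k : ι) (τ : ℝ) :
      Measurable fun r => ∫ ω, V k (H k ω) τ r ∂Q :=
    ((hV k τ).comp (measurable_fst.prodMk
      ((hHmeas k).comp measurable_snd))).stronglyMeasurable.integral_prod_right'.measurable
  have hcoverage (τ : ℝ) (hτ : 0 < τ) (k : ι) : ∀ᵐ r ∂ρ,
      1 - Q.real {ω | linkRate (P k) (G k r) N₀ PG (H k ω) (I k r ω) < τ} ∈
        Set.Icc (∫ ω, Vm k (H k ω) τ r ∂Q) (∫ ω, Vp k (H k ω) τ r ∂Q) := by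
    filter_upwards [hGpos k, hindep k, hpos k, hV k τ hτ] with r hg hXY hr hVr
    exact one_sub_measureReal_linkRate_lt_mem_Icc (hP k) hg hPG hτ (hHmeas k) (hHnn k)
      (hImeas k).of_uncurry_left hXY hr ((hVm k τ).comp measurable_prodMk_left)
      ((hVp k τ).comp measurable_prodMk_left) (fun h => hVm₀ k h τ r) (fun h => hVp₁ k h τ r) hVr
  have hmixture (τ : ℝ) (hτ : 0 < τ) := mixtureMean_mem_Icc_of_one_sub_mem_Icc hp hpsum hfnn hfint
    (houtMeas · τ) (hmeanMeas hVm · τ) (hmeanMeas hVp · τ)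
    (fun k => ae_of_all _ fun r => ⟨measureReal_nonneg, measureReal_le_one⟩)
    (fun k => ae_of_all _ fun r => integral_nonneg fun ω => hVm₀ k (H k ω) τ r)
    (fun k => ae_of_all _ fun r => integral_le_of_forall_le zero_le_one fun ω => hVp₁ k (H k ω) τ r)
    (hcoverage τ hτ)
  exact ⟨outageCapacity_anti fun τ hτ => (hmixture τ hτ).2,
    outageCapacity_anti fun τ hτ => (hmixture τ hτ).1⟩

/-- Theorem 7: bounds on the outage capacity `C_o(γ)` under the BARSS association
policy (mixture over tiers and connection distances).  Suprema are taken in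
`[0,∞]` (i.e. `ℝ≥0∞`) with `sup ∅ = 0`. -/
theorem barss_outage_capacity_bounds
    {Ω : Type*} [MeasureSpace Ω] [IsProbabilityMeasure (ℙ : Measure Ω)]
    (K : ℕ) (hK : 1 ≤ K)
    (P : Fin K → ℝ) (hP : ∀ k, 0 < P k)
    (G : Fin K → ℝ → ℝ) (hGmeas : ∀ k, Measurable (G k))
    (hGpos : ∀ k, ∀ r : ℝ, 0 ≤ r → 0 < G k r)
    (N₀ PG : ℝ) (hN₀ : 0 ≤ N₀) (hPG : 1 ≤ PG)
    (pstar : Fin K → ℝ) (hpstar : ∀ k, 0 ≤ pstar k) (hpsum : ∑ k, pstar k = 1)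
    (f : Fin K → ℝ → ℝ) (hfmeas : ∀ k, Measurable (f k))
    (hfnn : ∀ k r, 0 ≤ f k r) (hfint : ∀ k, ∫ r in Set.Ici (0 : ℝ), f k r = 1)
    (H : Fin K → Ω → ℝ) (hHmeas : ∀ k, Measurable (H k)) (hHnn : ∀ k ω, 0 ≤ H k ω)
    (I : Fin K → ℝ → Ω → ℝ)
    (hImeas : ∀ k, Measurable (Function.uncurry (I k)))
    (hInn : ∀ k, ∀ r : ℝ, 0 ≤ r → ∀ ω, 0 ≤ I k r ω)
    (hindep : ∀ k, ∀ r : ℝ, 0 ≤ r → IndepFun (H k) (I k r) ℙ)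
    (hI1 : ∀ k, ∀ r : ℝ, 0 ≤ r → Integrable (I k r) ℙ)
    (hI2 : ∀ k, ∀ r : ℝ, 0 ≤ r → Integrable (fun ω => (I k r ω) ^ 2) ℙ)
    (μ σ Ξ : Fin K → ℝ → ℝ)
    (hμmeas : ∀ k, Measurable (μ k)) (hσmeas : ∀ k, Measurable (σ k))
    (hΞmeas : ∀ k, Measurable (Ξ k))
    (hμ : ∀ k, ∀ r : ℝ, 0 ≤ r → μ k r = ∫ ω, I k r ω)
    (hσ : ∀ k, ∀ r : ℝ, 0 ≤ r → (σ k r) ^ 2 = ∫ ω, (I k r ω - μ k r) ^ 2)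
    (hσpos : ∀ k, ∀ r : ℝ, 0 ≤ r → 0 < σ k r)
    (hΞnn : ∀ k, ∀ r : ℝ, 0 ≤ r → 0 ≤ Ξ k r)
    (hpos : ∀ k, ∀ r : ℝ, 0 ≤ r → ∀ᵐ ω ∂(ℙ : Measure Ω), 0 < N₀ + I k r ω / PG)
    (hGauss : ∀ k, ∀ r : ℝ, 0 ≤ r → ∀ x : ℝ,
      |(ℙ {ω | (I k r ω - μ k r) / σ k r ≤ x}).toReal - stdNormalCDF x| ≤
        Ξ k r * berryC x)
    (ζ Vp Vm : Fin K → ℝ → ℝ → ℝ → ℝ)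
    (hζ : ∀ k h τ r, ζ k h τ r =
      (P k * (h * G k r / (Real.exp τ - 1) - N₀ / P k) * PG - μ k r) / σ k r)
    (hVp : ∀ k h τ r, Vp k h τ r =
      if (Real.exp τ - 1) * N₀ / (P k * G k r) ≤ h then
        min 1 (stdNormalCDF (ζ k h τ r) + Ξ k r * berryC (ζ k h τ r)) else 0)
    (hVm : ∀ k h τ r, Vm k h τ r =
      if (Real.exp τ - 1) * N₀ / (P k * G k r) ≤ h then
        max 0 (stdNormalCDF (ζ k h τ r) - Ξ k r * berryC (ζ k h τ r)) else 0)
    (γ : ℝ) (hγ : γ ∈ Set.Ioo (0 : ℝ) 1)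
    (Co : ℝ≥0∞)
    (hCo : Co = sSup (ENNReal.ofReal '' {τ : ℝ | 0 ≤ τ ∧
      (∑ k, pstar k * ∫ r in Set.Ici (0 : ℝ),
        (ℙ {ω | Real.log (1 + P k * H k ω * G k r / (N₀ + I k r ω / PG)) < τ}).toReal
          * f k r) ≤ γ})) :
    Co ≤ sSup (ENNReal.ofReal '' {τ : ℝ | 0 ≤ τ ∧
        1 - (∑ k, pstar k * ∫ r in Set.Ici (0 : ℝ), f k r * ∫ ω, Vp k (H k ω) τ r) ≤ γ}) ∧
      sSup (ENNReal.ofReal '' {τ : ℝ | 0 ≤ τ ∧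
        1 - (∑ k, pstar k * ∫ r in Set.Ici (0 : ℝ), f k r * ∫ ω, Vm k (H k ω) τ r) ≤ γ}) ≤ Co := by
  have hdist {q : ℝ → Prop} (h : ∀ r, 0 ≤ r → q r) : ∀ᵐ r ∂volume.restrict (Set.Ici 0), q r :=
    ae_restrict_of_forall_mem measurableSet_Ici h
  have hPG₀ : 0 < PG := zero_lt_one.trans_le hPG
  obtain rfl : Vp = fun k h τ r =>
      gaussianCoverageUpper (P k) (G k r) N₀ PG (μ k r) (σ k r) (Ξ k r) h τ := by
    funext k h τ r
    simp only [hVp, hζ, gaussianCoverageUpper, interferenceBudget]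
  obtain rfl : Vm = fun k h τ r =>
      gaussianCoverageLower (P k) (G k r) N₀ PG (μ k r) (σ k r) (Ξ k r) h τ := by
    funext k h τ r
    simp only [hVm, hζ, gaussianCoverageLower, interferenceBudget]
  simp_rw [mul_comm _ (f _ _)] at hCo
  rw [hCo, and_comm]
  exact barss_outage_capacity_bounds_general hP hGmeas (fun k => hdist (hGpos k)) hPG₀ hpstar hpsum
    (fun k => ae_of_all _ (hfnn k)) hfint hHmeas hHnn hImeas (fun k => hdist (hindep k))
    (fun k => hdist (hpos k))
    (fun k => measurable_gaussianCoverageLower (hGmeas k) (hμmeas k) (hσmeas k) (hΞmeas k) _ _ _)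
    (fun k => measurable_gaussianCoverageUpper (hGmeas k) (hμmeas k) (hσmeas k) (hΞmeas k) _ _ _)
    (fun _ _ _ _ => gaussianCoverageLower_nonneg ..)
    (fun _ _ _ _ => gaussianCoverageUpper_le_one ..)
    (fun k τ hτ => hdist fun r hr h _ => measureReal_le_interferenceBudget_mem_Icc (hP k)
      (hGpos k r hr) hPG₀ (hσpos k r hr) hτ (hInn k r hr) (hGauss k r hr) h) γ
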